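/- The logic L = S4.1 ∗ S4 + ◇₁□₂(◇₁p → □₁p) is decidable: membership of a bimodal formula in L is a decidable predicate (the set of formulas belonging to L is computable). -/

import Mathlib

/- ============== Formulas ============== -/

/-- Unimodal formulas. -/
inductive MForm : Type
  | var : ℕ → MForm
  | bot : MForm
  | imp : MForm → MForm → MForm
  | box : MForm → MForm

namespace MForm
def neg (A : MForm) : MForm := A.imp .bot
def dia (A : MForm) : MForm := (MForm.box A.neg).neg
def subst (σ : ℕ → MForm) : MForm → MForm
  | var n => σ n
  | bot => bot
  | imp A B => (subst σ A).imp (subst σ B)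
  | box A => MForm.box (subst σ A)
end MForm

/-- Bimodal formulas (`box 0` is □₁ and `box 1` is □₂). -/
inductive BForm : Type
  | var : ℕ → BForm
  | bot : BForm
  | imp : BForm → BForm → BForm
  | box : Fin 2 → BForm → BForm

namespace BForm
def neg (A : BForm) : BForm := A.imp .bot
def dia (i : Fin 2) (A : BForm) : BForm := (BForm.box i A.neg).neg
def subst (σ : ℕ → BForm) : BForm → BForm
  | var n => σ n
  | bot => bot
  | imp A B => (subst σ A).imp (subst σ B)
  | box i A => BForm.box i (subst σ A)
end BForm

/-- Translation of a unimodal formula into the bimodal language,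
reading □ as □ᵢ. -/
def MForm.toB (i : Fin 2) : MForm → BForm
  | .var n => .var n
  | .bot => .bot
  | .imp A B => (MForm.toB i A).imp (MForm.toB i B)
  | .box A => BForm.box i (MForm.toB i A)

/- ============== Normal modal logics ============== -/

/-- Provability in the smallest normal unimodal logic containing the axioms `Ax`:
classical tautologies (via a Hilbert axiomatization), the normality axiom,
modus ponens, necessitation and uniform substitution. -/
inductive MProv (Ax : Set MForm) : MForm → Prop
  | axm {A : MForm} : A ∈ Ax → MProv Ax A
  | pl1 {A B : MForm} : MProv Ax (A.imp (B.imp A))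
  | pl2 {A B C : MForm} : MProv Ax ((A.imp (B.imp C)).imp ((A.imp B).imp (A.imp C)))
  | pl3 {A : MForm} : MProv Ax ((A.neg.neg).imp A)
  | kax {A B : MForm} : MProv Ax ((MForm.box (A.imp B)).imp ((MForm.box A).imp (MForm.box B)))
  | mp {A B : MForm} : MProv Ax (A.imp B) → MProv Ax A → MProv Ax B
  | nec {A : MForm} : MProv Ax A → MProv Ax (MForm.box A)
  | subst {A : MForm} (σ : ℕ → MForm) : MProv Ax A → MProv Ax (A.subst σ)

/-- Provability in the smallest normal bimodal logic containing the axioms `Ax`. -/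
inductive BProv (Ax : Set BForm) : BForm → Prop
  | axm {A : BForm} : A ∈ Ax → BProv Ax A
  | pl1 {A B : BForm} : BProv Ax (A.imp (B.imp A))
  | pl2 {A B C : BForm} : BProv Ax ((A.imp (B.imp C)).imp ((A.imp B).imp (A.imp C)))
  | pl3 {A : BForm} : BProv Ax ((A.neg.neg).imp A)
  | kax (i : Fin 2) {A B : BForm} :
      BProv Ax ((BForm.box i (A.imp B)).imp ((BForm.box i A).imp (BForm.box i B)))
  | mp {A B : BForm} : BProv Ax (A.imp B) → BProv Ax A → BProv Ax B
  | nec (i : Fin 2) {A : BForm} : BProv Ax A → BProv Ax (BForm.box i A)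
  | subst {A : BForm} (σ : ℕ → BForm) : BProv Ax A → BProv Ax (A.subst σ)

/-- The propositional letter p. -/
def pM : MForm := .var 0

/-- Axioms of S4 : □p→p and □p→□□p. -/
def S4Ax : Set MForm := {(MForm.box pM).imp pM, (MForm.box pM).imp (MForm.box (MForm.box pM))}

/-- The McKinsey axiom □◇p→◇□p. -/
def McKM : MForm := (MForm.box pM.dia).imp (MForm.box pM).dia

/-- The logic S4. -/
def S4L : Set MForm := {A | MProv S4Ax A}

/-- The logic S4.1 = S4 + McKinsey. -/
def S41L : Set MForm := {A | MProv (S4Ax ∪ {McKM}) A}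

/-- Axioms of the fusion S4.1 ∗ S4 : all theorems of S4.1 read with □₁ together
with all theorems of S4 read with □₂. -/
def FusionAx : Set BForm := (MForm.toB 0 '' S41L) ∪ (MForm.toB 1 '' S4L)

/-- The fusion S4.1 ∗ S4 (as a normal bimodal logic). -/
def FusionL : Set BForm := {A | BProv FusionAx A}

def pB : BForm := .var 0

/-- The formula ◇₁□₂(◇₁p → □₁p). -/
def MKB : BForm := BForm.dia 0 (BForm.box 1 ((BForm.dia 0 pB).imp (BForm.box 0 pB)))

/-- The logic L = S4.1 ∗ S4 + ◇₁□₂(◇₁p → □₁p). -/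
def LL : Set BForm := {A | BProv (FusionAx ∪ {MKB}) A}

/- ============== Kripke semantics ============== -/

/-- Truth of a bimodal formula at a point of a Kripke 2-frame `(W, R 0, R 1)`
under valuation `V`. -/
def BSat {W : Type} (R : Fin 2 → W → W → Prop) (V : ℕ → W → Prop) : W → BForm → Prop
  | x, .var n => V n x
  | _, .bot => False
  | x, .imp A B => BSat R V x A → BSat R V x B
  | x, .box i A => ∀ y, R i x y → BSat R V y A

/-- Frame validity for bimodal formulas. -/
def BValid {W : Type} (R : Fin 2 → W → W → Prop) (A : BForm) : Prop :=
  ∀ (V : ℕ → W → Prop) (x : W), BSat R V x A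

/-- Truth of a unimodal formula at a point of a Kripke frame. -/
def MKSat {W : Type} (R : W → W → Prop) (V : ℕ → W → Prop) : W → MForm → Prop
  | x, .var n => V n x
  | _, .bot => False
  | x, .imp A B => MKSat R V x A → MKSat R V x B
  | x, .box A => ∀ y, R x y → MKSat R V y A

/-- Frame validity for unimodal formulas. -/
def MKValid {W : Type} (R : W → W → Prop) (A : MForm) : Prop :=
  ∀ (V : ℕ → W → Prop) (x : W), MKSat R V x A

/- ============== Topological semantics ============== -/

/-- Topological truth of a unimodal formula: □A holds at `x` iff some open
neighbourhood of `x` satisfies `A` everywhere. -/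
def MTSat {X : Type} (t : TopologicalSpace X) (V : ℕ → X → Prop) : X → MForm → Prop
  | x, .var n => V n x
  | _, .bot => False
  | x, .imp A B => MTSat t V x A → MTSat t V x B
  | x, .box A => ∃ U : Set X, t.IsOpen U ∧ x ∈ U ∧ ∀ y ∈ U, MTSat t V y A

/-- Topological validity for unimodal formulas. -/
def MTValid {X : Type} (t : TopologicalSpace X) (A : MForm) : Prop :=
  ∀ (V : ℕ → X → Prop) (x : X), MTSat t V x A

/-- Bitopological truth of a bimodal formula: □ᵢ is interpreted via the
topology `t i`. -/
def BTSat {X : Type} (t : Fin 2 → TopologicalSpace X) (V : ℕ → X → Prop) : X → BForm → Prop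
  | x, .var n => V n x
  | _, .bot => False
  | x, .imp A B => BTSat t V x A → BTSat t V x B
  | x, .box i A => ∃ U : Set X, (t i).IsOpen U ∧ x ∈ U ∧ ∀ y ∈ U, BTSat t V y A

/-- Bitopological validity for bimodal formulas. -/
def BTValid {X : Type} (t : Fin 2 → TopologicalSpace X) (A : BForm) : Prop :=
  ∀ (V : ℕ → X → Prop) (x : X), BTSat t V x A

/-- The horizontal topology on `X × Y`: generated by the base
`{U × {y} : U open in X, y ∈ Y}`. -/
def horiz {X Y : Type} (t : TopologicalSpace X) : TopologicalSpace (X × Y) :=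
  TopologicalSpace.generateFrom
    {S | ∃ (U : Set X) (y : Y), t.IsOpen U ∧ S = U ×ˢ ({y} : Set Y)}

/-- The vertical topology on `X × Y`: generated by the base
`{{x} × U : x ∈ X, U open in Y}`. -/
def vert {X Y : Type} (t : TopologicalSpace Y) : TopologicalSpace (X × Y) :=
  TopologicalSpace.generateFrom
    {S | ∃ (x : X) (U : Set Y), t.IsOpen U ∧ S = ({x} : Set X) ×ˢ U}

/-- The topological product `L₁ ×ₜ L₂` of two unimodal logics: the set of all
bimodal formulas valid in every bitopological product `𝔛₁ × 𝔛₂` of (nonempty)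
topological spaces with `𝔛₁ ⊨ L₁` and `𝔛₂ ⊨ L₂`. -/
def TopProdLogic (L1 L2 : Set MForm) : Set BForm :=
  {A | ∀ (X Y : Type) (t1 : TopologicalSpace X) (t2 : TopologicalSpace Y),
      Nonempty X → Nonempty Y →
      (∀ B ∈ L1, MTValid t1 B) → (∀ B ∈ L2, MTValid t2 B) →
      BTValid ![horiz t1, vert t2] A}

/-- The Alexandrov topology of a (reflexive transitive) relation `R`:
the topology with base `{R(x) : x ∈ W}`. -/
def alexandrov {W : Type} (R : W → W → Prop) : TopologicalSpace W :=
  TopologicalSpace.generateFrom {S | ∃ x, S = {t | R x t}}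

/-- A space is weakly scattered if every nonempty open set contains an
isolated point. -/
def WeaklyScattered {X : Type} (t : TopologicalSpace X) : Prop :=
  ∀ U : Set X, t.IsOpen U → U.Nonempty → ∃ x ∈ U, t.IsOpen ({x} : Set X)

/-- p-morphism between Kripke 1-frames. -/
def IsPMorphism {W U : Type} (R : W → W → Prop) (S : U → U → Prop) (f : W → U) : Prop :=
  Function.Surjective f ∧ (∀ x y, R x y → S (f x) (f y)) ∧
    (∀ x u, S (f x) u → ∃ y, R x y ∧ f y = u)

/-- p-morphism between Kripke 2-frames. -/
def IsPMorphism2 {W U : Type} (R1 R2 : W → W → Prop) (S1 S2 : U → U → Prop)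
    (f : W → U) : Prop :=
  Function.Surjective f ∧
    (∀ x y, R1 x y → S1 (f x) (f y)) ∧ (∀ x u, S1 (f x) u → ∃ y, R1 x y ∧ f y = u) ∧
    (∀ x y, R2 x y → S2 (f x) (f y)) ∧ (∀ x u, S2 (f x) u → ∃ y, R2 x y ∧ f y = u)

/- ============== The frames 𝕋₂,₂ and 𝕋₂,₂₊₂ ============== -/

/-- The four-letter alphabet {a₁,a₂,b₁,b₂}: `(false, i)` is the a-letter `aᵢ₊₁`
and `(true, i)` is the b-letter `bᵢ₊₁`. -/
abbrev Letter : Type := Bool × Fin 2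

/-- `T₂,₂ = {a₁,a₂,b₁,b₂}*`. -/
abbrev T22 : Type := List Letter

/-- `T₂ = {1,2}*`. -/
abbrev T2W : Type := List (Fin 2)

/-- First relation of `𝕋₂,₂`: append a word over the a-letters. -/
def R1T (w w' : T22) : Prop := ∃ c : T22, (∀ l ∈ c, l.1 = false) ∧ w' = w ++ c

/-- Second relation of `𝕋₂,₂`: append a word over the b-letters. -/
def R2T (w w' : T22) : Prop := ∃ d : T22, (∀ l ∈ d, l.1 = true) ∧ w' = w ++ d

/-- The carrier of `𝕋₂,₂₊₂` : `⟨a, root⟩` is encoded as `(a, none)` and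
`⟨a, b⟩` with `b ∈ T₂` as `(a, some b)`. -/
abbrev W222 : Type := T22 × Option T2W

/-- Generators of `R₁′`. -/
def R1'gen : W222 → W222 → Prop := fun x y =>
  (∃ a a', R1T a a' ∧ x = (a, none) ∧ y = (a', none)) ∨
  (∃ a, x = (a, none) ∧ y = (a, some ([] : T2W)))

/-- `R₁′`: smallest reflexive transitive relation containing the generators. -/
def R1' : W222 → W222 → Prop := Relation.ReflTransGen R1'gen

/-- Generators of `R₂′`. -/
def R2'gen : W222 → W222 → Prop := fun x y =>
  (∃ a a', R2T a a' ∧ x = (a, none) ∧ y = (a', none)) ∨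
  (∃ a b b', b <+: b' ∧ x = (a, some b) ∧ y = (a, some b'))

/-- `R₂′`: smallest reflexive transitive relation containing the generators. -/
def R2' : W222 → W222 → Prop := Relation.ReflTransGen R2'gen

/- ============== Pseudo-infinite paths and the spaces 𝒴 and 𝔛 ============== -/

/-- Infinite sequences over {0,1,2}: `none` encodes 0 and `some i` encodes
`i+1 ∈ {1,2}`. -/
abbrev Seq3 : Type := ℕ → Option (Fin 2)

/-- `W_ω`: pseudo-infinite paths, i.e. sequences with finitely many nonzero
entries. -/
def Wom : Type := {s : Seq3 // {k | s k ≠ none}.Finite}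

/-- `st(s)`: the least `N` such that all entries from `N` on are zero. -/
noncomputable def stN {γ : Type} (s : ℕ → Option γ) : ℕ :=
  sInf {N | ∀ k, N ≤ k → s k = none}

/-- The first `k` entries of a sequence, as a finite word. -/
def takeSeq {γ : Type} (s : ℕ → Option γ) (k : ℕ) : List (Option γ) :=
  List.ofFn (fun i : Fin k => s i.1)

/-- `f_F`: delete all zeros from a finite word. -/
def fF {γ : Type} (l : List (Option γ)) : List γ := l.filterMap id

/-- `f_ω`: delete the zeros from a pseudo-infinite path, producing a finite word. -/
noncomputable def squash {γ : Type} (s : ℕ → Option γ) : List γ := fF (takeSeq s (stN s))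

/-- The basic set `U_k(α) = {β ∈ W_ω : α↾k = β↾k and f_F(α↾k) ⊑ f_ω(β)}`. -/
def Uset (α : Wom) (k : ℕ) : Set Wom :=
  {β | takeSeq β.1 k = takeSeq α.1 k ∧ fF (takeSeq α.1 k) <+: squash β.1}

/-- The topology `T_ω` on `W_ω` generated by the base `{U_k(α) : k > 0}`;
`𝒴 = (W_ω, T_ω)`. -/
def Tom : TopologicalSpace Wom :=
  TopologicalSpace.generateFrom {S | ∃ α k, 0 < k ∧ S = Uset α k}

/-- The basic sets of the space `𝔛`:
`U′_k(α,0) = (U_k(α) × {0}) ∪ (U_k(α) × {n ≥ k})` and `U′_k(α,n) = {⟨α,n⟩}`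
for `n ≥ 1`. -/
def U'set (α : Wom) (k n : ℕ) : Set (Wom × ℕ) :=
  if n = 0 then (Uset α k ×ˢ ({0} : Set ℕ)) ∪ (Uset α k ×ˢ {m : ℕ | k ≤ m})
  else {(α, n)}

/-- The topology of the space `𝔛 = (W_ω × ℕ, T)`. -/
def TX : TopologicalSpace (Wom × ℕ) :=
  TopologicalSpace.generateFrom {S | ∃ α k n, S = U'set α k n}

/-- Interleaving of two paths: the sequence `a_{x₁} b_{y₁} a_{x₂} b_{y₂} …`
(with `a₀ = b₀ = 0`). -/
def interleave (α β : Seq3) : ℕ → Option Letter := fun n =>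
  if n % 2 = 0 then (α (n / 2)).map (fun v => ((false, v) : Letter))
  else (β (n / 2)).map (fun v => ((true, v) : Letter))

/-- The map `g : W_ω × W_ω → T₂,₂` obtained by interleaving and deleting zeros. -/
noncomputable def gmap (α β : Seq3) : T22 := squash (interleave α β)

/-- `g` as a map on pairs. -/
noncomputable def gPair : Wom × Wom → T22 := fun q => gmap q.1.1 q.2.1

/-- `s↾n · 0^ω`. -/
def truncSeq (s : Seq3) (n : ℕ) : Seq3 := fun k => if k < n then s k else none

/-- The tail `γ` of `s = s↾n · γ`. -/
def shiftSeq (s : Seq3) (n : ℕ) : Seq3 := fun k => s (n + k)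

/-- The map `f : 𝔛 × 𝒴 → 𝕋₂,₂₊₂` :
`f(⟨α,0⟩,β) = ⟨g(α,β), root⟩` and for `n ≥ 1`,
`f(⟨α,n⟩,β) = ⟨g(α↾n·0^ω, β↾n·0^ω), f_ω(γ)⟩` where `β = β↾n·γ`. -/
noncomputable def fXY : (Wom × ℕ) × Wom → W222 := fun q =>
  if q.1.2 = 0 then (gmap q.1.1.1 q.2.1, none)
  else (gmap (truncSeq q.1.1.1 q.1.2) (truncSeq q.2.1 q.1.2),
        some (squash (shiftSeq q.2.1 q.1.2)))

/-- An effective encoding of bimodal formulas by natural numbers. -/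
def encodeB : BForm → ℕ
  | .var n => Nat.pair 0 n
  | .bot => Nat.pair 1 0
  | .imp A B => Nat.pair 2 (Nat.pair (encodeB A) (encodeB B))
  | .box i A => Nat.pair 3 (Nat.pair i.1 (encodeB A))

/- ============== Primitive recursive search ============== -/

section Prim
variable {α : Type} [Primcodable α]

theorem pr_ex {b : α → ℕ} {P : α → ℕ → Prop} (hb : Primrec b)
    (hP : PrimrecPred (fun q : α × ℕ => P q.1 q.2)) : PrimrecPred fun a => ∃ x < b a, P a x := by
  have h1 : PrimrecRel (fun (x : ℕ) (a : α) => P a x) :=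
    hP.comp (Primrec.pair Primrec.snd Primrec.fst)
  have h2 := h1.exists_mem_list.comp (Primrec.list_range.comp hb) Primrec.id
  exact h2.of_eq (by simp)

theorem pr_all {b : α → ℕ} {P : α → ℕ → Prop} (hb : Primrec b)
    (hP : PrimrecPred (fun q : α × ℕ => P q.1 q.2)) : PrimrecPred fun a => ∀ x < b a, P a x := by
  have h1 : PrimrecRel (fun (x : ℕ) (a : α) => P a x) :=
    hP.comp (Primrec.pair Primrec.snd Primrec.fst)
  have h2 := h1.forall_mem_list.comp (Primrec.list_range.comp hb) Primrec.id
  exact h2.of_eq (by simp)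

theorem pr_imp {p q : α → Prop} (hp : PrimrecPred p) (hq : PrimrecPred q) :
    PrimrecPred fun a => p a → q a :=
  (hp.not.or hq).of_eq (fun a => by tauto)

theorem pr_pow2 {f : α → ℕ} (hf : Primrec f) : Primrec fun a => 2 ^ f a :=
  (Primrec₂.unpaired'.1 Nat.Primrec.pow).comp (Primrec.const 2) hf

/-- Bit `k` of `t`. -/
def bmem (k t : ℕ) : Prop := t.testBit k = true

theorem bmem_pr {k t : α → ℕ} (hk : Primrec k) (ht : Primrec t) :
    PrimrecPred fun a => bmem (k a) (t a) := by
  have : PrimrecPred fun a => t a / 2 ^ k a % 2 = 1 :=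
    Primrec.eq.comp (Primrec.nat_mod.comp (Primrec.nat_div.comp ht (pr_pow2 hk)) (Primrec.const 2))
      (Primrec.const 1)
  exact this.of_eq (fun a => by simp [bmem, Nat.testBit_eq_decide_div_mod_eq])

def cImp (a b : ℕ) : ℕ := Nat.pair 2 (Nat.pair a b)
def cBox (i a : ℕ) : ℕ := Nat.pair 3 (Nat.pair i a)

theorem cImp_pr {a b : α → ℕ} (ha : Primrec a) (hb : Primrec b) :
    Primrec fun x => cImp (a x) (b x) :=
  Primrec₂.natPair.comp (Primrec.const 2) (Primrec₂.natPair.comp ha hb)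

theorem cBox_pr {a b : α → ℕ} (ha : Primrec a) (hb : Primrec b) :
    Primrec fun x => cBox (a x) (b x) :=
  Primrec₂.natPair.comp (Primrec.const 3) (Primrec₂.natPair.comp ha hb)

/-- Accessibility between types. -/
def Acc2 (n i t u : ℕ) : Prop := ∀ a < n + 1, bmem (cBox i a) t → bmem (cBox i a) u

theorem Acc2_pr {n i t u : α → ℕ} (hn : Primrec n) (hi : Primrec i) (ht : Primrec t)
    (hu : Primrec u) : PrimrecPred fun a => Acc2 (n a) (i a) (t a) (u a) :=
  pr_all (P := fun a x => bmem (cBox (i a) x) (t a) → bmem (cBox (i a) x) (u a))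
    (Primrec.succ.comp hn)
    (pr_imp (bmem_pr (cBox_pr (hi.comp .fst) .snd) (ht.comp .fst))
      (bmem_pr (cBox_pr (hi.comp .fst) .snd) (hu.comp .fst)))

/-- Saturated types. -/
def Satd (n t : ℕ) : Prop :=
  ¬ bmem (Nat.pair 1 0) t ∧
  (∀ a < n + 1, ∀ b < n + 1, cImp a b ≤ n →
    ((bmem (cImp a b) t → bmem a t → bmem b t) ∧ ((bmem a t → bmem b t) → bmem (cImp a b) t))) ∧
  (∀ i < 2, ∀ a < n + 1, bmem (cBox i a) t → bmem a t)

theorem Satd_pr {n t : α → ℕ} (hn : Primrec n) (ht : Primrec t) :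
    PrimrecPred fun a => Satd (n a) (t a) := by
  refine (bmem_pr (.const _) ht).not.and (.and ?_ ?_)
  · refine pr_all (P := fun x a => ∀ b < n x + 1, cImp a b ≤ n x →
      ((bmem (cImp a b) (t x) → bmem a (t x) → bmem b (t x)) ∧
        ((bmem a (t x) → bmem b (t x)) → bmem (cImp a b) (t x)))) (Primrec.succ.comp hn) ?_
    refine pr_all (P := fun (y : α × ℕ) b => cImp y.2 b ≤ n y.1 →
      ((bmem (cImp y.2 b) (t y.1) → bmem y.2 (t y.1) → bmem b (t y.1)) ∧
        ((bmem y.2 (t y.1) → bmem b (t y.1)) → bmem (cImp y.2 b) (t y.1))))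
      (Primrec.succ.comp (hn.comp .fst)) ?_
    have hA : Primrec fun q : (α × ℕ) × ℕ => q.1.2 := Primrec.snd.comp .fst
    have hB : Primrec fun q : (α × ℕ) × ℕ => q.2 := Primrec.snd
    have hN : Primrec fun q : (α × ℕ) × ℕ => n q.1.1 := hn.comp (Primrec.fst.comp .fst)
    have hT : Primrec fun q : (α × ℕ) × ℕ => t q.1.1 := ht.comp (Primrec.fst.comp .fst)
    have hC := bmem_pr (cImp_pr hA hB) hT
    exact pr_imp (Primrec.nat_le.comp (cImp_pr hA hB) hN)
      ((pr_imp hC (pr_imp (bmem_pr hA hT) (bmem_pr hB hT))).and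
        (pr_imp (pr_imp (bmem_pr hA hT) (bmem_pr hB hT)) hC))
  · refine pr_all (P := fun x i => ∀ a < n x + 1, bmem (cBox i a) (t x) → bmem a (t x))
      (Primrec.const 2) ?_
    refine pr_all (P := fun (y : α × ℕ) a => bmem (cBox y.2 a) (t y.1) → bmem a (t y.1))
      (Primrec.succ.comp (hn.comp .fst)) ?_
    have hA : Primrec fun q : (α × ℕ) × ℕ => q.1.2 := Primrec.snd.comp .fst
    have hB : Primrec fun q : (α × ℕ) × ℕ => q.2 := Primrec.snd
    have hT : Primrec fun q : (α × ℕ) × ℕ => t q.1.1 := ht.comp (Primrec.fst.comp .fst)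
    exact pr_imp (bmem_pr (cBox_pr hA hB) hT) (bmem_pr hB hT)

/-- `t` has all its witnesses for `◇ᵢ` in the set `S`. -/
def Wit (n i S t : ℕ) : Prop :=
  ∀ a < n + 1, cBox i a ≤ n → ¬ bmem (cBox i a) t →
    ∃ u < 2 ^ (n + 1), bmem u S ∧ Acc2 n i t u ∧ ¬ bmem a u

theorem Wit_pr {n i S t : α → ℕ} (hn : Primrec n) (hi : Primrec i) (hS : Primrec S)
    (ht : Primrec t) : PrimrecPred fun a => Wit (n a) (i a) (S a) (t a) := by
  refine pr_all (P := fun x a => cBox (i x) a ≤ n x → ¬ bmem (cBox (i x) a) (t x) →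
    ∃ u < 2 ^ (n x + 1), bmem u (S x) ∧ Acc2 (n x) (i x) (t x) u ∧ ¬ bmem a u)
    (Primrec.succ.comp hn) ?_
  have hc : Primrec fun q : α × ℕ => cBox (i q.1) q.2 := cBox_pr (hi.comp .fst) .snd
  refine pr_imp (Primrec.nat_le.comp hc (hn.comp .fst)) (pr_imp (bmem_pr hc (ht.comp .fst)).not ?_)
  refine pr_ex (P := fun (y : α × ℕ) u => bmem u (S y.1) ∧ Acc2 (n y.1) (i y.1) (t y.1) u ∧
    ¬ bmem y.2 u) (pr_pow2 (Primrec.succ.comp (hn.comp .fst))) ?_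
  have hX : Primrec fun q : (α × ℕ) × ℕ => q.1.1 := Primrec.fst.comp .fst
  exact (bmem_pr .snd (hS.comp hX)).and
    ((Acc2_pr (hn.comp hX) (hi.comp hX) (ht.comp hX) .snd).and
      (bmem_pr (Primrec.snd.comp .fst) .snd).not)

def GoodM (n M : ℕ) : Prop :=
  ∀ u < 2 ^ (n + 1), bmem u M → Satd n u ∧
    (∀ a < n + 1, cBox 0 a ≤ n → bmem a u → bmem (cBox 0 a) u) ∧ Wit n 1 M u

theorem GoodM_pr {n M : α → ℕ} (hn : Primrec n) (hM : Primrec M) :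
    PrimrecPred fun a => GoodM (n a) (M a) := by
  refine pr_all (P := fun x u => bmem u (M x) → Satd (n x) u ∧
    (∀ a < n x + 1, cBox 0 a ≤ n x → bmem a u → bmem (cBox 0 a) u) ∧ Wit (n x) 1 (M x) u)
    (pr_pow2 (Primrec.succ.comp hn)) ?_
  refine pr_imp (bmem_pr .snd (hM.comp .fst)) ((Satd_pr (hn.comp .fst) .snd).and
    (.and ?_ (Wit_pr (hn.comp .fst) (.const 1) (hM.comp .fst) .snd)))
  refine pr_all (P := fun (y : α × ℕ) a => cBox 0 a ≤ n y.1 → bmem a y.2 → bmem (cBox 0 a) y.2)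
    (Primrec.succ.comp (hn.comp .fst)) ?_
  have hX : Primrec fun q : (α × ℕ) × ℕ => q.1.1 := Primrec.fst.comp .fst
  have hU : Primrec fun q : (α × ℕ) × ℕ => q.1.2 := Primrec.snd.comp .fst
  have hc : Primrec fun q : (α × ℕ) × ℕ => cBox 0 q.2 := cBox_pr (.const 0) .snd
  exact pr_imp (Primrec.nat_le.comp hc (hn.comp hX))
    (pr_imp (bmem_pr .snd hU) (bmem_pr hc hU))

def GoodS (n S M : ℕ) : Prop :=
  ∀ t < 2 ^ (n + 1), bmem t S → Satd n t ∧ Wit n 0 S t ∧ Wit n 1 S t ∧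
    ∃ u < 2 ^ (n + 1), bmem u M ∧ Acc2 n 0 t u

theorem GoodS_pr {n S M : α → ℕ} (hn : Primrec n) (hS : Primrec S) (hM : Primrec M) :
    PrimrecPred fun a => GoodS (n a) (S a) (M a) := by
  refine pr_all (P := fun x t => bmem t (S x) → Satd (n x) t ∧ Wit (n x) 0 (S x) t ∧
    Wit (n x) 1 (S x) t ∧ ∃ u < 2 ^ (n x + 1), bmem u (M x) ∧ Acc2 (n x) 0 t u)
    (pr_pow2 (Primrec.succ.comp hn)) ?_
  have hn' : Primrec fun q : α × ℕ => n q.1 := hn.comp .fst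
  have hS' : Primrec fun q : α × ℕ => S q.1 := hS.comp .fst
  refine pr_imp (bmem_pr .snd hS') ((Satd_pr hn' .snd).and
    ((Wit_pr hn' (.const 0) hS' .snd).and ((Wit_pr hn' (.const 1) hS' .snd).and ?_)))
  refine pr_ex (P := fun (y : α × ℕ) u => bmem u (M y.1) ∧ Acc2 (n y.1) 0 y.2 u)
    (pr_pow2 (Primrec.succ.comp hn')) ?_
  have hX : Primrec fun q : (α × ℕ) × ℕ => q.1.1 := Primrec.fst.comp .fst
  exact (bmem_pr .snd (hM.comp hX)).and
    (Acc2_pr (hn.comp hX) (.const 0) (Primrec.snd.comp .fst) .snd)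

/-- There is a refuting pair of sets of types. -/
def Refutable (n : ℕ) : Prop :=
  ∃ S < 2 ^ 2 ^ (n + 1), ∃ M < 2 ^ 2 ^ (n + 1), GoodM n M ∧ GoodS n S M ∧
    ∃ t < 2 ^ (n + 1), bmem t S ∧ ¬ bmem n t

theorem Refutable_pr : PrimrecPred Refutable := by
  have hp : Primrec fun n : ℕ => 2 ^ 2 ^ (n + 1) := pr_pow2 (pr_pow2 Primrec.succ)
  refine pr_ex (P := fun n S => ∃ M < 2 ^ 2 ^ (n + 1), GoodM n M ∧ GoodS n S M ∧
    ∃ t < 2 ^ (n + 1), bmem t S ∧ ¬ bmem n t) hp ?_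
  refine pr_ex (P := fun (y : ℕ × ℕ) M => GoodM y.1 M ∧ GoodS y.1 y.2 M ∧
    ∃ t < 2 ^ (y.1 + 1), bmem t y.2 ∧ ¬ bmem y.1 t) (hp.comp .fst) ?_
  have hX : Primrec fun q : (ℕ × ℕ) × ℕ => q.1.1 := Primrec.fst.comp .fst
  have hS : Primrec fun q : (ℕ × ℕ) × ℕ => q.1.2 := Primrec.snd.comp .fst
  refine (GoodM_pr hX .snd).and ((GoodS_pr hX hS .snd).and ?_)
  refine pr_ex (P := fun (y : (ℕ × ℕ) × ℕ) t => bmem t y.1.2 ∧ ¬ bmem y.1.1 t)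
    (pr_pow2 (Primrec.succ.comp hX)) ?_
  exact (bmem_pr .snd (hS.comp .fst)).and (bmem_pr (hX.comp .fst) .snd).not

end Prim

/- ============== Soundness ============== -/

section Sound
variable {W : Type} {R : Fin 2 → W → W → Prop}

theorem BSat_subst (σ : ℕ → BForm) (V : ℕ → W → Prop) (A : BForm) :
    ∀ x, BSat R V x (A.subst σ) ↔ BSat R (fun k y => BSat R V y (σ k)) x A := by
  induction A with
  | var n => intro x; simp [BForm.subst, BSat]
  | bot => intro x; simp [BForm.subst, BSat]
  | imp A B ihA ihB => intro x; simp [BForm.subst, BSat, ihA, ihB]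
  | box i A ih => intro x; simp [BForm.subst, BSat, ih]

theorem toB_subst (i : Fin 2) (σ : ℕ → MForm) (A : MForm) :
    (A.subst σ).toB i = (A.toB i).subst (fun k => (σ k).toB i) := by
  induction A with
  | var n => rfl
  | bot => rfl
  | imp A B ihA ihB => simp [MForm.subst, MForm.toB, BForm.subst, ihA, ihB]
  | box A ih => simp [MForm.subst, MForm.toB, BForm.subst, ih]

theorem MProv_sound {Ax : Set MForm} (i : Fin 2) (h : ∀ A ∈ Ax, BValid R (A.toB i)) {A : MForm}
    (hA : MProv Ax A) : BValid R (A.toB i) := by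
  induction hA with
  | axm h' => exact h _ h'
  | pl1 => intro V x a b; exact a
  | pl2 => intro V x a b c; exact a c (b c)
  | pl3 => intro V x a; exact by_contra a
  | kax => intro V x a b y hy; exact a y hy (b y hy)
  | mp _ _ h1 h2 => intro V x; exact h1 V x (h2 V x)
  | nec _ ih => intro V x y _; exact ih V y
  | subst σ _ ih =>
    intro V x
    rw [toB_subst, BSat_subst]
    exact ih _ x

theorem BProv_sound {Ax : Set BForm} (h : ∀ A ∈ Ax, BValid R A) {A : BForm}
    (hA : BProv Ax A) : BValid R A := by
  induction hA with
  | axm h' => exact h _ h'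
  | pl1 => intro V x a b; exact a
  | pl2 => intro V x a b c; exact a c (b c)
  | pl3 => intro V x a; exact by_contra a
  | kax i => intro V x a b y hy; exact a y hy (b y hy)
  | mp _ _ h1 h2 => intro V x; exact h1 V x (h2 V x)
  | nec i _ ih => intro V x y _; exact ih V y
  | subst σ _ ih =>
    intro V x
    rw [BSat_subst]
    exact ih _ x

theorem LL_sound (hr : ∀ i x, R i x x) (ht : ∀ i x y z, R i x y → R i y z → R i x z)
    (hm : ∀ x, ∃ y, R 0 x y ∧ ∀ z, R 1 y z → ∀ w, R 0 z w → w = z) {A : BForm} (hA : A ∈ LL) :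
    BValid R A := by
  have hS4 : ∀ i, ∀ A ∈ S4Ax, BValid R (A.toB i) := by
    rintro i A (rfl | rfl)
    · intro V x h; exact h x (hr i x)
    · intro V x h y hy z hz; exact h z (ht _ _ _ _ hy hz)
  refine BProv_sound ?_ hA
  rintro A ((⟨B, hB, rfl⟩ | ⟨B, hB, rfl⟩) | rfl)
  · refine MProv_sound 0 ?_ hB
    rintro C (hC | rfl)
    · exact hS4 0 C hC
    · intro V x h h2
      obtain ⟨y, hy, hy'⟩ := hm x
      have hy2 := hy' y (hr 1 y)
      refine h y hy (fun z hz hp => ?_)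
      rw [hy2 z hz] at hp
      refine h2 y hy (fun w hw => ?_)
      rw [hy2 w hw]; exact hp
  · exact MProv_sound 1 (hS4 1) hB
  · intro V x h
    obtain ⟨y, hy, hy'⟩ := hm x
    refine h y hy (fun z hz hd w hw => ?_)
    by_contra hp
    refine hd (fun v hv hq => ?_)
    rw [hy' z hz w hw] at hp
    rw [hy' z hz v hv] at hq
    exact hp hq

end Sound

def TyS (n S : ℕ) : Type := {t : ℕ // t < 2 ^ (n + 1) ∧ bmem t S}

/-- The finite frame built from a refuting pair. -/
def RF (n S M : ℕ) (i : Fin 2) : TyS n S ⊕ TyS n M → TyS n S ⊕ TyS n M → Prop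
  | .inl t, .inl t' => Acc2 n i.1 t.1 t'.1
  | .inl t, .inr u => i = 0 ∧ Acc2 n 0 t.1 u.1
  | .inr _, .inl _ => False
  | .inr u, .inr u' => (i = 0 → u' = u) ∧ (i = 1 → Acc2 n 1 u.1 u'.1)

def tyv {n S M : ℕ} : TyS n S ⊕ TyS n M → ℕ
  | .inl t => t.1
  | .inr t => t.1

theorem Acc2_refl (n i t : ℕ) : Acc2 n i t t := fun _ _ h => h

theorem Acc2_trans {n i t u v : ℕ} (h : Acc2 n i t u) (h' : Acc2 n i u v) : Acc2 n i t v :=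
  fun a ha hb => h' a ha (h a ha hb)

theorem RF_acc {n S M : ℕ} {i : Fin 2} {x y : TyS n S ⊕ TyS n M} (h : RF n S M i x y) :
    Acc2 n i.1 (tyv x) (tyv y) := by
  rcases x with x | x <;> rcases y with y | y
  · exact h
  · obtain ⟨rfl, h⟩ := h; exact h
  · exact h.elim
  · obtain ⟨h1, h2⟩ := h
    fin_cases i
    · rw [h1 rfl]; exact Acc2_refl _ _ _
    · exact h2 rfl

theorem RF_sat {n S M : ℕ} (hM : GoodM n M) (hS : GoodS n S M) (x : TyS n S ⊕ TyS n M) :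
    Satd n (tyv x) := by
  rcases x with x | x
  · exact (hS x.1 x.2.1 x.2.2).1
  · exact (hM x.1 x.2.1 x.2.2).1

theorem cImp_le {a b : ℕ} : a ≤ cImp a b ∧ b ≤ cImp a b :=
  ⟨(Nat.left_le_pair a b).trans (Nat.right_le_pair _ _),
    (Nat.right_le_pair a b).trans (Nat.right_le_pair _ _)⟩

theorem cBox_le {i a : ℕ} : a ≤ cBox i a :=
  (Nat.right_le_pair i a).trans (Nat.right_le_pair _ _)

theorem RF_truth {n S M : ℕ} (hM : GoodM n M) (hS : GoodS n S M) (A : BForm) :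
    encodeB A ≤ n → ∀ x : TyS n S ⊕ TyS n M,
      (BSat (RF n S M) (fun k y => bmem (Nat.pair 0 k) (tyv y)) x A ↔ bmem (encodeB A) (tyv x)) := by
  induction A with
  | var k => intro _ x; rfl
  | bot =>
    intro _ x
    exact ⟨fun h => h.elim, fun h => ((RF_sat hM hS x).1 h).elim⟩
  | imp A B ihA ihB =>
    intro hle x
    have hle' : cImp (encodeB A) (encodeB B) ≤ n := hle
    have ha := cImp_le.1.trans hle'
    have hb := cImp_le.2.trans hle'
    have h := (RF_sat hM hS x).2.1 _ (Nat.lt_succ_of_le ha) _ (Nat.lt_succ_of_le hb) hle'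
    have e1 := ihA ha x
    have e2 := ihB hb x
    change (_ → _) ↔ bmem (cImp (encodeB A) (encodeB B)) _
    rw [e1, e2]
    exact ⟨h.2, h.1⟩
  | box i A ih =>
    intro hle x
    have hle' : cBox i.1 (encodeB A) ≤ n := hle
    have ha := cBox_le.trans hle'
    have ha' := Nat.lt_succ_of_le ha
    change (∀ y, RF n S M i x y → _) ↔ bmem (cBox i.1 (encodeB A)) _
    constructor
    · intro h
      by_contra hc
      rcases x with x | x
      · have hw : Wit n i.1 S x.1 := by
          obtain ⟨_, h0, h1, _⟩ := hS x.1 x.2.1 x.2.2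
          fin_cases i
          · exact h0
          · exact h1
        obtain ⟨u, hu, huS, hacc, hn⟩ := hw _ ha' hle' hc
        exact hn ((ih ha (.inl ⟨u, hu, huS⟩)).1 (h (.inl ⟨u, hu, huS⟩) hacc))
      · obtain ⟨_, h0, h1⟩ := hM x.1 x.2.1 x.2.2
        fin_cases i
        · refine hc (h0 _ ha' hle' ?_)
          exact (ih ha (.inr x)).1 (h (.inr x) ⟨fun _ => rfl, fun h => by simp at h⟩)
        · obtain ⟨u, hu, huS, hacc, hn⟩ := h1 _ ha' hle' hc
          exact hn ((ih ha (.inr ⟨u, hu, huS⟩)).1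
            (h (.inr ⟨u, hu, huS⟩) ⟨fun h => by simp at h, fun _ => hacc⟩))
    · intro h y hy
      refine (ih ha y).2 ?_
      exact (RF_sat hM hS y).2.2 i.1 i.2 _ ha' (RF_acc hy _ ha' h)

theorem Refutable_sound {A : BForm} (h : Refutable (encodeB A)) : A ∉ LL := by
  intro hA
  obtain ⟨S, _, M, _, hM, hS, t, ht, htS, hn⟩ := h
  have hv := LL_sound (R := RF (encodeB A) S M) ?_ ?_ ?_ hA
  · exact hn ((RF_truth hM hS A le_rfl (.inl ⟨t, ht, htS⟩)).1 (hv _ _))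
  · rintro i (x | x)
    · exact Acc2_refl _ _ _
    · exact ⟨fun _ => rfl, fun _ => Acc2_refl _ _ _⟩
  · rintro i (x | x) (y | y) (z | z) h1 h2
    · exact Acc2_trans h1 h2
    · obtain ⟨rfl, h2⟩ := h2
      exact ⟨rfl, Acc2_trans h1 h2⟩
    · exact h2.elim
    · obtain ⟨rfl, h1⟩ := h1
      refine ⟨rfl, ?_⟩
      rw [h2.1 rfl]; exact h1
    · exact h1.elim
    · exact h1.elim
    · exact h2.elim
    · exact ⟨fun h => (h2.1 h).trans (h1.1 h), fun h => Acc2_trans (h1.2 h) (h2.2 h)⟩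
  · have key : ∀ y : TyS (encodeB A) M, ∀ z, RF (encodeB A) S M 1 (.inr y) z → ∀ w,
        RF (encodeB A) S M 0 z w → w = z := by
      rintro y (z | z) h1 (w | w) h2
      · exact h1.elim
      · exact h1.elim
      · exact h2.elim
      · rw [h2.1 rfl]
    rintro (x | x)
    · obtain ⟨_, _, _, u, hu, huM, hacc⟩ := hS x.1 x.2.1 x.2.2
      exact ⟨.inr ⟨u, hu, huM⟩, ⟨rfl, hacc⟩, key _⟩
    · exact ⟨.inr x, ⟨fun _ => rfl, fun h => by simp at h⟩, key _⟩

/- ============== Completeness ============== -/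

/-- Derivability from assumptions (without necessitation). -/
inductive Der (Γ : Set BForm) : BForm → Prop
  | thm {A : BForm} : A ∈ LL → Der Γ A
  | hyp {A : BForm} : A ∈ Γ → Der Γ A
  | mp {A B : BForm} : Der Γ (A.imp B) → Der Γ A → Der Γ B

theorem Der.mono {Γ Δ : Set BForm} (h : Γ ⊆ Δ) {A : BForm} (hA : Der Γ A) : Der Δ A := by
  induction hA with
  | thm h' => exact .thm h'
  | hyp h' => exact .hyp (h h')
  | mp _ _ h1 h2 => exact .mp h1 h2

theorem Der.ded {Γ : Set BForm} {A B : BForm} (h : Der (insert A Γ) B) : Der Γ (A.imp B) := by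
  induction h with
  | thm h' => exact .mp (.thm .pl1) (.thm h')
  | hyp h' =>
    rcases h' with rfl | h'
    · exact .mp (.mp (.thm .pl2) (.thm .pl1)) (.thm (.pl1 (B := .bot)))
    · exact .mp (.thm .pl1) (.hyp h')
  | mp _ _ h1 h2 => exact .mp (.mp (.thm .pl2) h1) h2

theorem Der.chain {c : Set (Set BForm)} (hc : IsChain (· ⊆ ·) c) (hne : c.Nonempty) {A : BForm}
    (h : Der (⋃₀ c) A) : ∃ Γ ∈ c, Der Γ A := by
  induction h with
  | thm h' => obtain ⟨Γ, hΓ⟩ := hne; exact ⟨Γ, hΓ, .thm h'⟩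
  | hyp h' => obtain ⟨Γ, hΓ, h'⟩ := h'; exact ⟨Γ, hΓ, .hyp h'⟩
  | mp _ _ h1 h2 =>
    obtain ⟨Γ, hΓ, h1⟩ := h1
    obtain ⟨Δ, hΔ, h2⟩ := h2
    rcases hc.total hΓ hΔ with h | h
    · exact ⟨Δ, hΔ, .mp (h1.mono h) h2⟩
    · exact ⟨Γ, hΓ, .mp h1 (h2.mono h)⟩

structure MCS (Γ : Set BForm) : Prop where
  closed : ∀ A, Der Γ A → A ∈ Γ
  bot : BForm.bot ∉ Γ
  tot : ∀ A, A ∈ Γ ∨ A.neg ∈ Γ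

theorem lindenbaum {Γ : Set BForm} {B : BForm} (h : ¬ Der Γ B) :
    ∃ Δ, MCS Δ ∧ Γ ⊆ Δ ∧ B ∉ Δ := by
  have h0 : ¬ Der (insert B.neg Γ) .bot := fun h' => h (.mp (.thm .pl3) h'.ded)
  obtain ⟨Δ, hΔ, hmax⟩ := zorn_subset_nonempty {Δ : Set BForm | ¬ Der Δ .bot}
    (fun c hc hch hne => ⟨⋃₀ c, fun h' => by
      obtain ⟨Γ', hΓ', h''⟩ := h'.chain hch hne
      exact hc hΓ' h'', fun s hs => Set.subset_sUnion_of_mem hs⟩) _ h0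
  have hcon : ¬ Der Δ .bot := hmax.prop
  have hin : ∀ A, ¬ Der (insert A Δ) .bot → A ∈ Δ := fun A hA =>
    hmax.le_of_ge (y := insert A Δ) hA (Set.subset_insert _ _) (Set.mem_insert _ _)
  have hm : MCS Δ := by
    refine ⟨fun A hA => hin A fun h' => hcon (.mp h'.ded hA), fun h' => hcon (.hyp h'), fun A => ?_⟩
    by_contra hc
    push Not at hc
    have h1 : Der (insert A Δ) .bot := by_contra fun h' => hc.1 (hin A h')
    have h2 : Der (insert A.neg Δ) .bot := by_contra fun h' => hc.2 (hin _ h')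
    exact hcon (.mp h2.ded h1.ded)
  exact ⟨Δ, hm, fun A hA => hΔ (Set.mem_insert_of_mem _ hA), fun hB =>
    hcon (.mp (.hyp (hΔ (Set.mem_insert _ _))) (.hyp hB))⟩

namespace MCS
theorem thm {Γ : Set BForm} (h : MCS Γ) {A : BForm} (hA : A ∈ LL) : A ∈ Γ := h.closed _ (.thm hA)

theorem mp {Γ : Set BForm} (h : MCS Γ) {A B : BForm} (h1 : A.imp B ∈ Γ) (h2 : A ∈ Γ) : B ∈ Γ :=
  h.closed _ (.mp (.hyp h1) (.hyp h2))

theorem neg_iff {Γ : Set BForm} (h : MCS Γ) {A : BForm} : A.neg ∈ Γ ↔ A ∉ Γ :=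
  ⟨fun h1 h2 => h.bot (h.mp h1 h2), fun h1 => (h.tot A).resolve_left h1⟩

theorem imp_iff {Γ : Set BForm} (h : MCS Γ) {A B : BForm} : A.imp B ∈ Γ ↔ (A ∈ Γ → B ∈ Γ) := by
  refine ⟨h.mp, fun h1 => ?_⟩
  by_cases hB : B ∈ Γ
  · exact h.closed _ (.mp (.thm .pl1) (.hyp hB))
  · have hA : A.neg ∈ Γ := h.neg_iff.2 fun hA => hB (h1 hA)
    refine h.closed _ (Der.ded (.mp (.thm .pl3) ?_))
    exact .mp (.thm .pl1) (.mp (.hyp (Set.mem_insert_of_mem _ hA)) (.hyp (Set.mem_insert _ _)))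

theorem exist {Γ : Set BForm} (h : MCS Γ) {i : Fin 2} {B : BForm} (hB : BForm.box i B ∉ Γ) :
    ∃ Δ, MCS Δ ∧ (∀ C, BForm.box i C ∈ Γ → C ∈ Δ) ∧ B ∉ Δ := by
  have : ¬ Der {C | BForm.box i C ∈ Γ} B := by
    intro hd
    apply hB
    clear hB
    induction hd with
    | thm h' => exact h.thm (.nec i h')
    | hyp h' => exact h'
    | mp _ _ h1 h2 => exact h.mp (h.mp (h.thm (.kax i)) h1) h2
  obtain ⟨Δ, h1, h2, h3⟩ := lindenbaum this
  exact ⟨Δ, h1, fun C hC => h2 hC, h3⟩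

theorem dia_exist {Γ : Set BForm} (h : MCS Γ) {i : Fin 2} {B : BForm} (hB : BForm.dia i B ∈ Γ) :
    ∃ Δ, MCS Δ ∧ (∀ C, BForm.box i C ∈ Γ → C ∈ Δ) ∧ B ∈ Δ := by
  obtain ⟨Δ, h1, h2, h3⟩ := h.exist (h.neg_iff.1 hB)
  exact ⟨Δ, h1, h2, by_contra fun h4 => h3 (h1.neg_iff.2 h4)⟩

end MCS

theorem LL_ax4T (i : Fin 2) (A : BForm) :
    (BForm.box i A).imp A ∈ LL ∧ (BForm.box i A).imp (BForm.box i (BForm.box i A)) ∈ LL := by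
  have hmem : ∀ B ∈ S4Ax, B.toB i ∈ FusionAx := by
    intro B hB
    fin_cases i
    · exact Or.inl ⟨B, .axm (Or.inl hB), rfl⟩
    · exact Or.inr ⟨B, .axm hB, rfl⟩
  have hT : BProv (FusionAx ∪ {MKB}) (((MForm.box pM).imp pM).toB i) :=
    .axm (Or.inl (hmem _ (Or.inl rfl)))
  have h4 : BProv (FusionAx ∪ {MKB}) (((MForm.box pM).imp (MForm.box (MForm.box pM))).toB i) :=
    .axm (Or.inl (hmem _ (Or.inr rfl)))
  exact ⟨BProv.subst (fun _ => A) hT, BProv.subst (fun _ => A) h4⟩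

/-- The formula `◇₁A → □₁A`. -/
def Fin1 (A : BForm) : BForm := (BForm.dia 0 A).imp (BForm.box 0 A)

theorem LL_MKB (A : BForm) : BForm.dia 0 (BForm.box 1 (Fin1 A)) ∈ LL := by
  have h : BProv (FusionAx ∪ {MKB}) MKB := .axm (Or.inr rfl)
  exact BProv.subst (fun _ => A) h

namespace MCS
theorem T {Γ : Set BForm} (h : MCS Γ) {i : Fin 2} {A : BForm} (hA : BForm.box i A ∈ Γ) : A ∈ Γ := h.mp (h.thm (LL_ax4T i A).1) hA

theorem four {Γ : Set BForm} (h : MCS Γ) {i : Fin 2} {A : BForm} (hA : BForm.box i A ∈ Γ) : BForm.box i (BForm.box i A) ∈ Γ :=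
  h.mp (h.thm (LL_ax4T i A).2) hA

theorem dia_of_mem {Γ : Set BForm} (h : MCS Γ) {i : Fin 2} {A : BForm} (hA : A ∈ Γ) : BForm.dia i A ∈ Γ :=
  h.neg_iff.2 fun hb => h.neg_iff.1 (h.T hb) hA

/-- `Fin1 A` follows from `□₁A` or `□₁¬A`. -/
theorem fin1_of {Γ : Set BForm} (h : MCS Γ) {A : BForm} (h' : BForm.box 0 A ∈ Γ ∨ BForm.box 0 A.neg ∈ Γ) : Fin1 A ∈ Γ := by
  refine h.imp_iff.2 fun h1 => ?_
  rcases h' with h' | h'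
  · exact h'
  · exact (h.neg_iff.1 h1 h').elim

theorem of_fin1 {Γ : Set BForm} (h : MCS Γ) {A : BForm} (h' : Fin1 A ∈ Γ) : BForm.box 0 A ∈ Γ ∨ BForm.box 0 A.neg ∈ Γ := by
  by_contra hc
  push Not at hc
  exact hc.1 (h.mp h' (h.neg_iff.2 hc.2))

/-- Above every point there is a point that is final with respect to a finite list. -/
theorem final {Γ : Set BForm} (h : MCS Γ) (l : List BForm) : ∃ Δ, MCS Δ ∧ (∀ C, BForm.box 0 C ∈ Γ → C ∈ Δ) ∧
    ∀ A ∈ l, BForm.box 0 A ∈ Δ ∨ BForm.box 0 A.neg ∈ Δ := by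
  induction l with
  | nil => exact ⟨Γ, h, fun C hC => h.T hC, by simp⟩
  | cons A l ih =>
    obtain ⟨Δ, hΔ, h1, h2⟩ := ih
    obtain ⟨Θ, hΘ, h3, h4⟩ := hΔ.dia_exist (hΔ.thm (LL_MKB A))
    refine ⟨Θ, hΘ, fun C hC => h3 _ (h1 _ (h.four hC)), ?_⟩
    intro B hB
    rcases List.mem_cons.1 hB with rfl | hB
    · exact hΘ.of_fin1 (hΘ.T h4)
    · exact (h2 B hB).imp (fun h' => h3 _ (hΔ.four h')) (fun h' => h3 _ (hΔ.four h'))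

end MCS

/-- Conjunction of the formulas `Fin1 A`. -/
def bigFin : List BForm → BForm
  | [] => BForm.bot.imp .bot
  | A :: l => ((Fin1 A).imp (bigFin l).neg).neg

theorem MCS.bigFin_iff {Γ : Set BForm} (h : MCS Γ) (l : List BForm) :
    bigFin l ∈ Γ ↔ ∀ A ∈ l, Fin1 A ∈ Γ := by
  induction l with
  | nil => simp [bigFin, h.imp_iff]
  | cons A l ih =>
    simp only [bigFin, h.neg_iff, h.imp_iff, ih, List.mem_cons, forall_eq_or_imp]
    tauto

theorem MCS.max_exist {Γ : Set BForm} (h : MCS Γ) (l : List BForm) :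
    ∃ Δ, MCS Δ ∧ (∀ C, BForm.box 0 C ∈ Γ → C ∈ Δ) ∧ BForm.box 1 (bigFin l) ∈ Δ := by
  obtain ⟨Δ, hΔ, h1, h2⟩ := h.dia_exist (h.thm (LL_MKB (bigFin l).neg))
  refine ⟨Δ, hΔ, h1, ?_⟩
  by_contra hc
  obtain ⟨Θ, hΘ, h3, h4⟩ := hΔ.exist hc
  have h5 : (bigFin l).neg ∈ Θ := hΘ.neg_iff.2 h4
  have h6 : BForm.box 0 (bigFin l).neg ∈ Θ := hΘ.mp (h3 _ h2) (hΘ.dia_of_mem h5)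
  obtain ⟨Ξ, hΞ, h7, h8⟩ := hΘ.final l
  exact hΞ.neg_iff.1 (h7 _ h6) ((hΞ.bigFin_iff l).2 fun A hA => hΞ.fin1_of (h8 A hA))

/-- Total decoding of formulas. -/
def decB (n : ℕ) : BForm :=
  match e : n.unpair with
  | (0, m) => .var m
  | (2, m) =>
    have h1 : m < n := by
      have := Nat.pair_unpair n
      rw [e] at this
      rw [← this]
      simp only [Nat.pair]; split_ifs <;> nlinarith
    have h2 : m.unpair.1 ≤ m := Nat.unpair_left_le m
    have h3 : m.unpair.2 ≤ m := Nat.unpair_right_le m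
    .imp (decB m.unpair.1) (decB m.unpair.2)
  | (3, m) =>
    have h1 : m < n := by
      have := Nat.pair_unpair n
      rw [e] at this
      rw [← this]
      simp only [Nat.pair]; split_ifs <;> nlinarith
    have h3 : m.unpair.2 ≤ m := Nat.unpair_right_le m
    .box (if m.unpair.1 = 0 then 0 else 1) (decB m.unpair.2)
  | _ => .bot
termination_by n
decreasing_by all_goals omega

theorem decB_eq0 {n m : ℕ} (h : n.unpair = (0, m)) : decB n = .var m := by
  rw [decB]
  split <;> simp_all

theorem decB_eq1 {n m : ℕ} (h : n.unpair = (1, m)) : decB n = .bot := by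
  rw [decB]
  split <;> simp_all

theorem decB_eq2 {n m : ℕ} (h : n.unpair = (2, m)) :
    decB n = .imp (decB m.unpair.1) (decB m.unpair.2) := by
  rw [decB]
  split <;> simp_all

theorem decB_eq3 {n m : ℕ} (h : n.unpair = (3, m)) :
    decB n = .box (if m.unpair.1 = 0 then 0 else 1) (decB m.unpair.2) := by
  rw [decB]
  split <;> simp_all

theorem decB_imp (a b : ℕ) : decB (cImp a b) = (decB a).imp (decB b) := by
  rw [cImp, decB_eq2 (Nat.unpair_pair _ _), Nat.unpair_pair]

theorem decB_box (i : Fin 2) (a : ℕ) : decB (cBox i.1 a) = BForm.box i (decB a) := by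
  rw [cBox, decB_eq3 (Nat.unpair_pair _ _), Nat.unpair_pair]
  fin_cases i <;> simp

theorem decB_bot : decB (Nat.pair 1 0) = .bot := decB_eq1 (Nat.unpair_pair _ _)

theorem decB_var (k : ℕ) : decB (Nat.pair 0 k) = .var k := decB_eq0 (Nat.unpair_pair _ _)

theorem decB_enc (A : BForm) : decB (encodeB A) = A := by
  induction A with
  | var n => exact decB_var n
  | bot => exact decB_bot
  | imp A B ihA ihB => exact (decB_imp _ _).trans (by rw [ihA, ihB])
  | box i A ih => exact (decB_box i _).trans (by rw [ih])

open Classical in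
/-- The number with a given set of bits. -/
noncomputable def bits (N : ℕ) (P : ℕ → Prop) : ℕ := Nat.ofBits (fun i : Fin N => decide (P i.1))

theorem bits_lt (N : ℕ) (P : ℕ → Prop) : bits N P < 2 ^ N := Nat.ofBits_lt_two_pow _

theorem bmem_bits (N : ℕ) (P : ℕ → Prop) (k : ℕ) : bmem k (bits N P) ↔ k < N ∧ P k := by
  unfold bmem bits
  by_cases hk : k < N
  · rw [Nat.testBit_ofBits_lt _ _ hk]; simp [hk]
  · rw [Nat.testBit_ofBits_ge _ _ (not_lt.1 hk)]; simp [hk]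

/-- The trace of a maximal consistent set. -/
noncomputable def tr (n : ℕ) (Γ : Set BForm) : ℕ := bits (n + 1) (fun k => decB k ∈ Γ)

theorem tr_lt (n : ℕ) (Γ : Set BForm) : tr n Γ < 2 ^ (n + 1) := bits_lt _ _

theorem bmem_tr {n : ℕ} {Γ : Set BForm} {k : ℕ} : bmem k (tr n Γ) ↔ k ≤ n ∧ decB k ∈ Γ := by
  rw [tr, bmem_bits, Nat.lt_succ_iff]

theorem tr_satd {n : ℕ} {Γ : Set BForm} (h : MCS Γ) : Satd n (tr n Γ) := by
  refine ⟨?_, ?_, ?_⟩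
  · rw [bmem_tr, decB_bot]; exact fun h' => h.bot h'.2
  · intro a ha b hb hab
    simp only [bmem_tr, decB_imp, h.imp_iff]
    have := Nat.lt_succ_iff.1 ha
    have := Nat.lt_succ_iff.1 hb
    tauto
  · intro i hi a ha
    have hd := decB_box ⟨i, hi⟩ a
    simp only at hd
    rw [bmem_tr, bmem_tr, hd]
    exact fun h' => ⟨Nat.lt_succ_iff.1 ha, h.T h'.2⟩

theorem tr_acc {n : ℕ} {Γ Δ : Set BForm} (hΓ : MCS Γ) (i : Fin 2)
    (h : ∀ C, BForm.box i C ∈ Γ → C ∈ Δ) : Acc2 n i.1 (tr n Γ) (tr n Δ) := by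
  intro a _
  rw [bmem_tr, bmem_tr, decB_box]
  exact fun hb => ⟨hb.1, h _ (hΓ.four hb.2)⟩

/-- Set of traces of maximal consistent sets satisfying `P`. -/
noncomputable def trs (n : ℕ) (P : Set BForm → Prop) : ℕ :=
  bits (2 ^ (n + 1)) (fun t => ∃ Γ, MCS Γ ∧ P Γ ∧ t = tr n Γ)

theorem bmem_trs {n : ℕ} {P : Set BForm → Prop} {t : ℕ} :
    bmem t (trs n P) ↔ ∃ Γ, MCS Γ ∧ P Γ ∧ t = tr n Γ := by
  rw [trs, bmem_bits]
  refine ⟨fun h => h.2, fun h => ⟨?_, h⟩⟩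
  obtain ⟨Γ, _, _, rfl⟩ := h
  exact tr_lt _ _

theorem tr_wit {n : ℕ} {P : Set BForm → Prop} (i : Fin 2) {Γ : Set BForm} (hΓ : MCS Γ)
    (hP : ∀ Δ, (∀ C, BForm.box i C ∈ Γ → C ∈ Δ) → P Δ) : Wit n i.1 (trs n P) (tr n Γ) := by
  intro a ha hle hn
  rw [bmem_tr, decB_box] at hn
  obtain ⟨Δ, hΔ, h1, h2⟩ := hΓ.exist (fun h' => hn ⟨hle, h'⟩)
  refine ⟨tr n Δ, tr_lt _ _, bmem_trs.2 ⟨Δ, hΔ, hP Δ h1, rfl⟩, tr_acc hΓ i h1, ?_⟩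
  rw [bmem_tr]
  exact fun h' => h2 h'.2

theorem Refutable_complete {A : BForm} (hA : A ∉ LL) : Refutable (encodeB A) := by
  set n := encodeB A with hn
  let l : List BForm := (List.range (n + 1)).map decB
  let P : Set BForm → Prop := fun Γ => BForm.box 1 (bigFin l) ∈ Γ
  refine ⟨trs n (fun _ => True), bits_lt _ _, trs n P, bits_lt _ _, ?_, ?_, ?_⟩
  · intro u _ hu
    obtain ⟨Γ, hΓ, hP, rfl⟩ := bmem_trs.1 hu
    refine ⟨tr_satd hΓ, ?_, tr_wit 1 hΓ fun Δ hΔ => hΔ _ (hΓ.four hP)⟩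
    intro a ha hle
    have hd := decB_box 0 a
    simp only [Fin.val_zero] at hd
    rw [bmem_tr, bmem_tr, hd]
    refine fun h' => ⟨hle, ?_⟩
    have hf := (hΓ.bigFin_iff l).1 (hΓ.T hP) (decB a)
      (List.mem_map.2 ⟨a, List.mem_range.2 ha, rfl⟩)
    exact hΓ.mp hf (hΓ.dia_of_mem h'.2)
  · intro t _ ht
    obtain ⟨Γ, hΓ, _, rfl⟩ := bmem_trs.1 ht
    refine ⟨tr_satd hΓ, tr_wit 0 hΓ fun _ _ => trivial, tr_wit 1 hΓ fun _ _ => trivial, ?_⟩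
    obtain ⟨Δ, hΔ, h1, h2⟩ := hΓ.max_exist l
    exact ⟨tr n Δ, tr_lt _ _, bmem_trs.2 ⟨Δ, hΔ, h2, rfl⟩, tr_acc hΓ 0 h1⟩
  · have : ¬ Der ∅ A := by
      intro hd
      apply hA
      clear hn hA
      clear_value n
      induction hd with
      | thm h' => exact h'
      | hyp h' => exact h'.elim
      | mp _ _ h1 h2 => exact .mp h1 h2
    obtain ⟨Γ, hΓ, _, h2⟩ := lindenbaum this
    refine ⟨tr n Γ, tr_lt _ _, bmem_trs.2 ⟨Γ, hΓ, trivial, rfl⟩, ?_⟩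
    rw [bmem_tr, hn, decB_enc]
    exact fun hb => h2 hb.2

/-- L = S4.1 ∗ S4 + ◇₁□₂(◇₁p → □₁p) is decidable: membership in L
is decidable by a computable function on (an effective encoding of) formulas. -/
theorem LL_decidable :
    Function.Injective encodeB ∧
    ∃ f : ℕ → Bool, Computable f ∧ ∀ A : BForm, (f (encodeB A) = true ↔ A ∈ LL) := by
  classical
  refine ⟨Function.LeftInverse.injective (g := decB) decB_enc,
    fun n => decide (¬ Refutable n), (Refutable_pr.not.decide).to_comp, fun A => ?_⟩
  rw [decide_eq_true_eq]
  exact ⟨fun h => by_contra fun h' => h (Refutable_complete h'),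
    fun h h' => Refutable_sound h' h⟩
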